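/- arXiv:2502.17707 — 4 statements merged into one kernel-verified Lean document; each statement's English description precedes it below -/
import Mathlib

section
/- Let M be an n-manifold and V ⊆ U ⊆ M with U and V open Hausdorff subsets. If (closure of V) ∩ U is quasi-compact, then (closure of V) − U ⊆ NH((closure of V) ∩ U). -/
open Set Topology TopologicalSpace

universe u

/-- Two points are inseparable (`x ⋈ y`): distinct, and every open set containing
one meets every open set containing the other. -/
def Bump {X : Type u} [TopologicalSpace X] (x y : X) : Prop :=
  x ≠ y ∧ ∀ U V : Set X, IsOpen U → IsOpen V → x ∈ U → y ∈ V → (U ∩ V).Nonempty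

/-- `NH A` = points inseparable from some point of `A`. -/
def NH {X : Type u} [TopologicalSpace X] (A : Set X) : Set X :=
  {y | ∃ x ∈ A, Bump y x}

/-- `NHpt x = NH {x}`. -/
def NHpt {X : Type u} [TopologicalSpace X] (x : X) : Set X := NH {x}

/-- An Euclidean subset: open and homeomorphic to ℝⁿ. -/
def IsEuclidean {X : Type u} [TopologicalSpace X] (n : ℕ) (U : Set X) : Prop :=
  IsOpen U ∧ Nonempty (U ≃ₜ EuclideanSpace ℝ (Fin n))

/-- An `n`-manifold: nonempty connected space, every point has an open
neighborhood homeomorphic to ℝⁿ (Hausdorffness NOT assumed). -/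
def IsNManifold (X : Type u) [TopologicalSpace X] (n : ℕ) : Prop :=
  ConnectedSpace X ∧ ∀ x : X, ∃ U : Set X, x ∈ U ∧ IsEuclidean n U

/-- Locally Hausdorff space. -/
def LocallyHausdorff (X : Type u) [TopologicalSpace X] : Prop :=
  ∀ x : X, ∃ U : Set X, IsOpen U ∧ x ∈ U ∧ T2Space U

/-- Quasi-countably-compact subset: every countable open cover has a finite subcover. -/
def QuasiCountablyCompact {X : Type u} [TopologicalSpace X] (K : Set X) : Prop :=
  ∀ U : ℕ → Set X, (∀ n, IsOpen (U n)) → K ⊆ ⋃ n, U n →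
    ∃ s : Finset ℕ, K ⊆ ⋃ n ∈ s, U n

/-- `A` is `κ`-Baire in `X`: not covered by fewer than `κ` nowhere dense sets. -/
def KappaBaire {X : Type u} [TopologicalSpace X] (κ : Cardinal.{u}) (A : Set X) : Prop :=
  ∀ (ι : Type u) (F : ι → Set X), Cardinal.mk ι < κ →
    (∀ i, IsNowhereDense (F i)) → ¬ A ⊆ ⋃ i, F i

/-- `S` is a scan of `A` in `X`. -/
def IsScan {X : Type u} [TopologicalSpace X] (S A : Set X) : Prop :=
  S ⊆ NH A ∧ ∀ x ∈ A, ((NHpt x).Nonempty ↔ (NHpt x ∩ S).Nonempty)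

/-- `U` is sorted: a continuous map from `closure U` to a Hausdorff space,
injective on `U`. -/
def IsSorted {X : Type u} [TopologicalSpace X] (U : Set X) : Prop :=
  ∃ (H : Type u) (tH : TopologicalSpace H) (f : closure U → H),
    @T2Space H tH ∧ @Continuous _ H _ tH f ∧
      ∀ a b : closure U, (a : X) ∈ U → (b : X) ∈ U → f a = f b → a = b

/-- `U` is weakly sorted: a continuous map from `closure U` to a Hausdorff space,
finite-to-one on `U`. -/
def IsWeaklySorted {X : Type u} [TopologicalSpace X] (U : Set X) : Prop :=
  ∃ (H : Type u) (tH : TopologicalSpace H) (f : closure U → H),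
    @T2Space H tH ∧ @Continuous _ H _ tH f ∧
      ∀ h : H, {a : closure U | (a : X) ∈ U ∧ f a = h}.Finite

/-- H-maximal: open Hausdorff, with no open Hausdorff proper superset. -/
def IsHMaximal {X : Type u} [TopologicalSpace X] (U : Set X) : Prop :=
  IsOpen U ∧ T2Space U ∧
    ∀ V : Set X, IsOpen V → T2Space V → U ⊆ V → V = U

/-- CH-maximal: connected open Hausdorff, with no connected open Hausdorff
proper superset. -/
def IsCHMaximal {X : Type u} [TopologicalSpace X] (U : Set X) : Prop :=
  IsConnected U ∧ IsOpen U ∧ T2Space U ∧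
    ∀ V : Set X, IsConnected V → IsOpen V → T2Space V → U ⊆ V → V = U

/-- `U` is f-simple at `p`: every open `V ∋ p` contains an open `W ∋ p` such that
`W ∩ U` has finitely many connected components. -/
def FSimpleAt {X : Type u} [TopologicalSpace X] (U : Set X) (p : X) : Prop :=
  ∀ V : Set X, IsOpen V → p ∈ V → ∃ W : Set X, IsOpen W ∧ p ∈ W ∧ W ⊆ V ∧
    {C : Set X | ∃ z ∈ W ∩ U, C = connectedComponentIn (W ∩ U) z}.Finite

/-- f-rim-simple: f-simple at every boundary point. -/
def FRimSimple {X : Type u} [TopologicalSpace X] (U : Set X) : Prop :=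
  ∀ p ∈ closure U \ U, FSimpleAt U p

/-- cov(ℳ): least cardinality of a family of nowhere dense subsets of ℝ covering ℝ. -/
noncomputable def covMeager : Cardinal :=
  sInf {c : Cardinal | ∃ (ι : Type) (F : ι → Set ℝ),
    Cardinal.mk ι = c ∧ (∀ i, IsNowhereDense (F i)) ∧ ⋃ i, F i = Set.univ}

/-- A locally compact first countable S-space: Hausdorff, regular, locally compact,
first countable, hereditarily separable, not Lindelöf. -/
def IsLCFCSSpace (S : Type) [TopologicalSpace S] : Prop :=
  T2Space S ∧ RegularSpace S ∧ LocallyCompactSpace S ∧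
    FirstCountableTopology S ∧ (∀ A : Set S, SeparableSpace A) ∧ ¬ LindelofSpace S

/-! If `V ⊆ U`, then `V` lies in `K = closure V ∩ U`, so every point `y` of `closure V \ U` lies in
`closure K \ K`. When `K` is quasi-compact, the trace on `K` of the neighborhood filter of `y` has
a cluster point `x ∈ K`, and `x` is inseparable from `y`. -/

section

variable {X : Type u} [TopologicalSpace X]

theorem bump_iff_ne_and_clusterPt {x y : X} : Bump x y ↔ x ≠ y ∧ ClusterPt y (𝓝 x) := by
  refine and_congr_right fun _ => ?_
  rw [ClusterPt, inf_comm, (nhds_basis_opens x).inf_basis_neBot_iff (nhds_basis_opens y)]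
  exact ⟨fun h _ hU _ hV => h _ _ hU.2 hV.2 hU.1 hV.1,
    fun h _ _ hU hV hxU hyV => h ⟨hxU, hU⟩ ⟨hyV, hV⟩⟩

theorem closure_sdiff_self_subset_nh_of_isCompact {K : Set X} (hK : IsCompact K) :
    closure K \ K ⊆ NH K := by
  rintro y ⟨hy_closure, hyK⟩
  have : (𝓝 y ⊓ Filter.principal K).NeBot := mem_closure_iff_clusterPt.mp hy_closure
  obtain ⟨x, hxK, hx_cluster⟩ : ∃ x ∈ K, ClusterPt x (𝓝 y ⊓ Filter.principal K) :=
    hK inf_le_right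
  have hyx : y ≠ x := (ne_of_mem_of_not_mem hxK hyK).symm
  exact ⟨x, hxK, bump_iff_ne_and_clusterPt.mpr ⟨hyx, hx_cluster.mono inf_le_left⟩⟩

theorem stmt16_general {U V : Set X} (hVU : V ⊆ U) (hcpt : IsCompact (closure V ∩ U)) :
    closure V \ U ⊆ NH (closure V ∩ U) := by
  have hV : V ⊆ closure V ∩ U := subset_inter subset_closure hVU
  calc closure V \ U
    _ ⊆ closure (closure V ∩ U) \ (closure V ∩ U) :=
      sdiff_subset_sdiff (closure_mono hV) inter_subset_right
    _ ⊆ NH (closure V ∩ U) := closure_sdiff_self_subset_nh_of_isCompact hcpt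

end

/-- For open Hausdorff `V ⊆ U` in a manifold with `closure V ∩ U`
quasi-compact, `closure V − U ⊆ NH (closure V ∩ U)`. -/
theorem stmt16 {M : Type u} [TopologicalSpace M] (n : ℕ) (hM : IsNManifold M n)
    (U V : Set M) (hVU : V ⊆ U) (hUopen : IsOpen U) (hUT2 : T2Space U)
    (hVopen : IsOpen V) (hVT2 : T2Space V)
    (hcpt : IsCompact (closure V ∩ U)) :
    closure V \ U ⊆ NH (closure V ∩ U) :=
  stmt16_general hVU hcpt
end

section
/- Let I be an index type, let X_i be a topological space for each i ∈ I, and let X = Π_{i∈I} X_i carry the product topology. Then for every x ∈ X, NH_X(x) = {y ∈ X : y ≠ x and for every i ∈ I, either y_i = x_i or y_i and x_i are inseparable in X_i}. -/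
open Set Topology TopologicalSpace

universe u

/-!
Up to the diagonal, `x ⋈ y` says that the filter `𝓝 x ⊓ 𝓝 y` is nontrivial. Neighbourhood filters
in a product are product filters, `Filter.pi` commutes with infima, and a product of filters is
nontrivial if and only if each factor is.
-/

theorem pi_inf_pi {ι : Type*} {α : ι → Type*} (f g : ∀ i, Filter (α i)) :
    Filter.pi f ⊓ Filter.pi g = Filter.pi fun i => f i ⊓ g i := by
  simp only [Filter.pi, Filter.comap_inf, iInf_inf_eq]

theorem nhds_inf_nhds_pi_neBot_iff {ι : Type*} {X : ι → Type*} [∀ i, TopologicalSpace (X i)]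
    {x y : ∀ i, X i} : (𝓝 x ⊓ 𝓝 y).NeBot ↔ ∀ i, (𝓝 (x i) ⊓ 𝓝 (y i)).NeBot := by
  rw [nhds_pi, nhds_pi, pi_inf_pi, Filter.pi_neBot]

section

variable {X : Type*} [TopologicalSpace X] {x y : X}

theorem nhds_inf_nhds_neBot_iff_forall_isOpen :
    (𝓝 x ⊓ 𝓝 y).NeBot ↔
      ∀ U V : Set X, IsOpen U → IsOpen V → x ∈ U → y ∈ V → (U ∩ V).Nonempty := by
  rw [(nhds_basis_opens x).inf_basis_neBot_iff (nhds_basis_opens y)]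
  exact ⟨fun h U V hU hV hx hy => h ⟨hx, hU⟩ ⟨hy, hV⟩,
    fun h U hU V hV => h U V hU.2 hV.2 hU.1 hV.1⟩

theorem bump_iff_ne_and_nhds_inf_nhds_neBot : Bump x y ↔ x ≠ y ∧ (𝓝 x ⊓ 𝓝 y).NeBot :=
  and_congr_right' nhds_inf_nhds_neBot_iff_forall_isOpen.symm

theorem eq_or_bump_iff_nhds_inf_nhds_neBot : x = y ∨ Bump x y ↔ (𝓝 x ⊓ 𝓝 y).NeBot := by
  rw [bump_iff_ne_and_nhds_inf_nhds_neBot]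
  by_cases hxy : x = y <;> simp [hxy]

theorem mem_NHpt_iff_bump : y ∈ NHpt x ↔ Bump y x := by
  simp [NHpt, NH]

end

/-- In a product space, `NH(x)` consists exactly of those `y ≠ x`
such that in each coordinate, `y i = x i` or `y i ⋈ x i`. -/
theorem stmt17 {I : Type*} (X : I → Type*) [∀ i, TopologicalSpace (X i)]
    (x : ∀ i, X i) :
    NHpt x = {y : ∀ i, X i | y ≠ x ∧ ∀ i, y i = x i ∨ Bump (y i) (x i)} := by
  ext y
  calc y ∈ NHpt x
      ↔ y ≠ x ∧ (𝓝 y ⊓ 𝓝 x).NeBot := by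
        rw [mem_NHpt_iff_bump, bump_iff_ne_and_nhds_inf_nhds_neBot]
    _ ↔ y ≠ x ∧ ∀ i, (𝓝 (y i) ⊓ 𝓝 (x i)).NeBot := by rw [nhds_inf_nhds_pi_neBot_iff]
    _ ↔ y ≠ x ∧ ∀ i, y i = x i ∨ Bump (y i) (x i) := by
        simp only [eq_or_bump_iff_nhds_inf_nhds_neBot]
end

section
/- Let M be an n-manifold and N ⊆ M a subset such that every family of at most ℵ₁ open subsets of M covering N has a countable subfamily covering N. Then the subspace N is hereditarily Lindelöf. -/
open Set Topology TopologicalSpace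

universe u

/-!
A space that is not hereditarily Lindelöf contains a right-separated `ω₁`-sequence `x`, built by
transfinite recursion from an open cover without countable subcover. If `x` lies in `N`, then the
complements of the closures of its tails form an increasing `ω₁`-family of open sets with no
countable subfamily covering `N`, so by hypothesis some `y ∈ N` lies in the closure of every tail.
But a right-separated `ω₁`-sequence leaves every hereditarily Lindelöf set from some index on, in
particular a Euclidean neighborhood of `y`.
-/

theorem hereditarilyLindelofSpace_coe_iff {X : Type*} [TopologicalSpace X] {s : Set X} :
    HereditarilyLindelofSpace s ↔ IsHereditarilyLindelof s := by
  constructor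
  · intro _ t hts
    have ht : IsLindelof ((↑) ⁻¹' t : Set s) := HereditarilyLindelofSpace.isLindelof _
    rwa [Subtype.isLindelof_iff, Subtype.image_preimage_coe, inter_eq_right.2 hts] at ht
  · intro hs
    exact ⟨fun t _ =>
      Subtype.isLindelof_iff.2 (hs.isLindelof_subset (Subtype.coe_image_subset s t))⟩

theorem IsEuclidean.isHereditarilyLindelof {X : Type u} [TopologicalSpace X] {n : ℕ} {U : Set X}
    (hU : IsEuclidean n U) : IsHereditarilyLindelof U := by
  obtain ⟨-, ⟨e⟩⟩ := hU
  have : SecondCountableTopology U := e.secondCountableTopology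
  exact hereditarilyLindelofSpace_coe_iff.1 inferInstance

theorem IsNManifold.exists_mem_nhds_isHereditarilyLindelof {X : Type u} [TopologicalSpace X]
    {n : ℕ} (hX : IsNManifold X n) (y : X) : ∃ s ∈ 𝓝 y, IsHereditarilyLindelof s := by
  obtain ⟨U, hyU, hU⟩ := hX.2 y
  exact ⟨U, hU.1.mem_nhds hyU, hU.isHereditarilyLindelof⟩

section Order

variable {I : Type*}

theorem exists_forall_mem_lt_of_countable [LinearOrder I] (hI : Cardinal.aleph0 < Order.cof I)
    {J : Set I} (hJ : J.Countable) : ∃ d, ∀ j ∈ J, j < d := by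
  have hJ' : ¬ IsCofinal J := fun h =>
    ((Order.cof_le h).trans (Cardinal.le_aleph0_iff_set_countable.2 hJ)).not_gt hI
  simpa only [IsCofinal, not_forall, not_exists, not_and, not_le] using hJ'

theorem aleph0_lt_cof_toType_omega_one :
    Cardinal.aleph0 < Order.cof (Ordinal.omega 1).ToType := by
  rw [Ordinal.cof_toType, Cardinal.cof_omega_one]
  exact Cardinal.aleph0_lt_aleph_one

theorem countable_Iio_toType_omega_one (a : (Ordinal.omega 1).ToType) : (Iio a).Countable := by
  have hlt := Cardinal.mk_Iio_lt a (by simp)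
  rwa [Cardinal.mk_toType, Ordinal.card_omega, Cardinal.lt_aleph_one_iff,
    Cardinal.le_aleph0_iff_set_countable] at hlt

theorem exists_forall_lt_rel_of_forall_countable_exists [Preorder I] [WellFoundedLT I]
    (hI : ∀ a : I, (Iio a).Countable) {α : Type*} (r : α → α → Prop)
    (hr : ∀ S : Set α, S.Countable → ∃ p, ∀ y ∈ S, r y p) :
    ∃ x : I → α, ∀ a b, a < b → r (x a) (x b) := by
  choose next hnext using hr
  have hcount (a : I) (f : Iio a → α) : (range f).Countable :=
    have := (hI a).to_subtype
    countable_range f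
  let x : I → α := wellFounded_lt.fix fun a ih => next _ (hcount a fun b => ih b b.2)
  have hx (a : I) : x a = next _ (hcount a fun b => x b) := wellFounded_lt.fix_eq _ a
  refine ⟨x, fun a b hab => ?_⟩
  rw [hx b]
  exact hnext _ _ _ ⟨⟨a, hab⟩, rfl⟩

end Order

/-- A right-separated family: no term is in the closure of the set of the later ones. For an
injective family indexed by a linear order this says that the initial segments are relatively open
in the range. -/
def IsRightSeparated {I X : Type*} [Preorder I] [TopologicalSpace X] (x : I → X) : Prop :=
  ∀ a, x a ∉ closure (x '' Ioi a)

theorem exists_isRightSeparated_of_not_isLindelof {I X : Type*} [Preorder I] [WellFoundedLT I]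
    [TopologicalSpace X] (hI : ∀ a : I, (Iio a).Countable) {A : Set X} (hA : ¬ IsLindelof A) :
    ∃ x : I → X, IsRightSeparated x ∧ ∀ a, x a ∈ A := by
  obtain ⟨ι, U, hUo, hAU, hU⟩ : ∃ (ι : Type _) (U : ι → Set X), (∀ i, IsOpen (U i)) ∧
      A ⊆ ⋃ i, U i ∧ ∀ t : Set ι, t.Countable → ¬ A ⊆ ⋃ i ∈ t, U i := by
    contrapose! hA
    exact isLindelof_of_countable_subcover fun U hUo hAU => hA _ U hUo hAU
  choose i hi using fun y : A => mem_iUnion.1 (hAU y.2)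
  have hescape (S : Set A) (hS : S.Countable) : ∃ p : A, ∀ y ∈ S, (p : X) ∉ U (i y) := by
    obtain ⟨p, hpA, hp⟩ := not_subset.1 (hU (i '' S) (hS.image i))
    exact ⟨⟨p, hpA⟩, fun y hy hpy => hp (mem_biUnion (mem_image_of_mem i hy) hpy)⟩
  obtain ⟨x, hx⟩ := exists_forall_lt_rel_of_forall_countable_exists hI _ hescape
  refine ⟨fun a => x a, fun a ha => ?_, fun a => (x a).2⟩
  obtain ⟨_, hb, b, hab, rfl⟩ := mem_closure_iff.1 ha _ (hUo (i (x a))) (hi (x a))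
  exact hx a b hab hb

section Tails

variable {I X : Type*} [LinearOrder I] [TopologicalSpace X] {x : I → X}

theorem IsRightSeparated.exists_forall_ge_notMem (hx : IsRightSeparated x)
    (hI : Cardinal.aleph0 < Order.cof I) {s : Set X} (hs : IsLindelof (s ∩ range x)) :
    ∃ d, ∀ a ≥ d, x a ∉ s := by
  obtain ⟨J, hJ, hsJ⟩ := hs.elim_countable_subcover (fun a => (closure (x '' Ioi a))ᶜ)
    (fun a => isClosed_closure.isOpen_compl)
    (by rintro _ ⟨-, a, rfl⟩; exact mem_iUnion.2 ⟨a, hx a⟩)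
  obtain ⟨d, hd⟩ := exists_forall_mem_lt_of_countable hI hJ
  refine ⟨d, fun a hda has => ?_⟩
  obtain ⟨j, hj, haj⟩ := mem_iUnion₂.1 (hsJ ⟨has, a, rfl⟩)
  exact haj (subset_closure ⟨a, (hd j hj).trans_le hda, rfl⟩)

theorem IsRightSeparated.exists_notMem_closure_image_Ici (hx : IsRightSeparated x)
    (hI : Cardinal.aleph0 < Order.cof I) {y : X} {s : Set X} (hsy : s ∈ 𝓝 y)
    (hs : IsHereditarilyLindelof s) : ∃ d, y ∉ closure (x '' Ici d) := by
  obtain ⟨d, hd⟩ := hx.exists_forall_ge_notMem hI (hs.isLindelof_subset inter_subset_left)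
  refine ⟨d, fun hy => ?_⟩
  obtain ⟨_, has, a, hda, rfl⟩ := mem_closure_iff_nhds.1 hy s hsy
  exact hd a hda has

theorem exists_mem_forall_mem_closure_image_Ici (hI : Cardinal.aleph0 < Order.cof I) {N : Set X}
    (hN : ∀ U : I → Set X, (∀ i, IsOpen (U i)) → N ⊆ ⋃ i, U i →
      ∃ J : Set I, J.Countable ∧ N ⊆ ⋃ i ∈ J, U i)
    (hx : ∀ a, x a ∈ N) : ∃ y ∈ N, ∀ d, y ∈ closure (x '' Ici d) := by
  by_contra! h
  obtain ⟨J, hJ, hNJ⟩ := hN (fun d => (closure (x '' Ici d))ᶜ)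
    (fun d => isClosed_closure.isOpen_compl) (fun y hy => mem_iUnion.2 (h y hy))
  obtain ⟨d, hd⟩ := exists_forall_mem_lt_of_countable hI hJ
  obtain ⟨j, hj, hdj⟩ := mem_iUnion₂.1 (hNJ (hx d))
  exact hdj (subset_closure ⟨d, (hd j hj).le, rfl⟩)

end Tails

theorem stmt18_general {X : Type u} [TopologicalSpace X] (N : Set X)
    (hX : ∀ y ∈ N, ∃ s ∈ 𝓝 y, IsHereditarilyLindelof s)
    (hN : ∀ (ι : Type u) (U : ι → Set X), Cardinal.mk ι ≤ Cardinal.aleph 1 →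
      (∀ i, IsOpen (U i)) → N ⊆ ⋃ i, U i →
        ∃ J : Set ι, J.Countable ∧ N ⊆ ⋃ i ∈ J, U i) :
    HereditarilyLindelofSpace N := by
  rw [hereditarilyLindelofSpace_coe_iff]
  intro A hAN
  by_contra hA
  let I : Type u := (Ordinal.omega.{u} 1).ToType
  have hI : Cardinal.aleph0 < Order.cof I := aleph0_lt_cof_toType_omega_one
  have hcard : Cardinal.mk I = Cardinal.aleph 1 := by
    rw [Cardinal.mk_toType, Ordinal.card_omega]
  obtain ⟨x, hx, hxA⟩ :=
    exists_isRightSeparated_of_not_isLindelof (I := I) countable_Iio_toType_omega_one hA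
  obtain ⟨y, hyN, hy⟩ :=
    exists_mem_forall_mem_closure_image_Ici hI (hN I · hcard.le) (fun a => hAN (hxA a))
  obtain ⟨s, hsy, hs⟩ := hX y hyN
  obtain ⟨d, hd⟩ := hx.exists_notMem_closure_image_Ici hI hsy hs
  exact hd (hy d)

/-- A subset `N` of a manifold such that every cover of `N` by at
most `ℵ₁` open sets has a countable subcover is hereditarily Lindelöf. -/
theorem stmt18 {M : Type u} [TopologicalSpace M] (n : ℕ) (hM : IsNManifold M n)
    (N : Set M)
    (hN : ∀ (ι : Type u) (U : ι → Set M), Cardinal.mk ι ≤ Cardinal.aleph 1 →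
      (∀ i, IsOpen (U i)) → N ⊆ ⋃ i, U i →
        ∃ J : Set ι, J.Countable ∧ N ⊆ ⋃ i ∈ J, U i) :
    HereditarilyLindelofSpace N := by
  exact stmt18_general N (fun y _ => hM.exists_mem_nhds_isHereditarilyLindelof y) hN
end

section
/- Let M be an n-manifold. Then M is hereditarily separable if and only if M contains no uncountable discrete subset. -/
open Set Topology TopologicalSpace

universe u

/-!
By a lemma of Shapirovskii, every neighborhood assignment `U` admits a discrete set `S` whose
closure, together with the sets `U x` for `x ∈ S`, covers the space. Take each `U x` separable: if
discrete sets are countable, the space is then a union of countably many separable sets. Local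
hereditary separability and countability of discrete sets both pass to subspaces, so this applies
to every subspace.
-/

theorem exists_set_mem_iff_of_wellFounded {α : Type*} {r : α → α → Prop} (hr : WellFounded r)
    (P : α → Set α → Prop) : ∃ S : Set α, ∀ a, a ∈ S ↔ P a {b | b ∈ S ∧ r b a} := by
  let S : Set α := {a | hr.fix (fun a mem ↦ P a {b | ∃ h : r b a, mem b h}) a}
  refine ⟨S, fun a ↦ ?_⟩
  have predecessors_eq : {b | b ∈ S ∧ r b a} = {b | ∃ _ : r b a, b ∈ S} := by
    ext b
    exact and_comm.trans exists_prop.symm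
  rw [predecessors_eq]
  exact Eq.to_iff (hr.fix_eq _ a)

section

variable {X : Type u} [TopologicalSpace X]

theorem isDiscrete_of_forall_notMem_closure_of_forall_notMem {r : X → X → Prop}
    [Std.Trichotomous r] {S : Set X} {U : X → Set X} (hU : ∀ x ∈ S, U x ∈ 𝓝 x)
    (notMem_closure : ∀ x ∈ S, x ∉ closure {y | y ∈ S ∧ r y x})
    (notMem_nhd : ∀ x ∈ S, ∀ y ∈ S, r y x → x ∉ U y) : IsDiscrete S := by
  refine .of_nhdsWithin fun x hx ↦ ?_
  rw [Filter.le_pure_iff, mem_nhdsWithin_iff_exists_mem_nhds_inter]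
  refine ⟨U x ∩ (closure {y | y ∈ S ∧ r y x})ᶜ, Filter.inter_mem (hU x hx)
    (isClosed_closure.isOpen_compl.mem_nhds (notMem_closure x hx)), ?_⟩
  rintro y ⟨⟨hyU, hy_closure⟩, hy⟩
  refine Std.Trichotomous.trichotomous (r := r) y x (fun hyx ↦ ?_) (fun hxy ↦ ?_)
  · exact hy_closure (subset_closure ⟨hy, hyx⟩)
  · exact notMem_nhd y hy x hx hxy hyU

theorem exists_isDiscrete_closure_union_biUnion_eq_univ {U : X → Set X} (hU : ∀ x, U x ∈ 𝓝 x) :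
    ∃ S : Set X, IsDiscrete S ∧ closure S ∪ ⋃ x ∈ S, U x = univ := by
  -- Along a well-order of `X`, select each point not yet covered by the earlier selections.
  obtain ⟨S, hS⟩ := exists_set_mem_iff_of_wellFounded
    (IsWellFounded.wf (r := WellOrderingRel (α := X))) fun x T ↦ x ∉ closure T ∪ ⋃ y ∈ T, U y
  refine ⟨S, isDiscrete_of_forall_notMem_closure_of_forall_notMem (r := WellOrderingRel)
    (fun x _ ↦ hU x) (fun x hx hx' ↦ (hS x).1 hx (.inl hx'))
    (fun x hx y hy hyx hxy ↦ (hS x).1 hx (.inr (mem_biUnion ⟨hy, hyx⟩ hxy))), ?_⟩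
  refine eq_univ_of_forall fun x ↦ ?_
  by_cases hx : x ∈ S
  · exact .inl (subset_closure hx)
  · have selected_subset : {y | y ∈ S ∧ WellOrderingRel y x} ⊆ S := fun y hy ↦ hy.1
    exact union_subset_union (closure_mono selected_subset)
      (biUnion_subset_biUnion_left selected_subset) (not_not.1 (mt (hS x).2 hx))

theorem separableSpace_of_forall_isDiscrete_countable
    (isSeparable_nhds : ∀ x : X, ∃ U ∈ 𝓝 x, IsSeparable U)
    (countable : ∀ S : Set X, IsDiscrete S → S.Countable) : SeparableSpace X := by
  choose U hU hU_sep using isSeparable_nhds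
  obtain ⟨S, hS, cover⟩ := exists_isDiscrete_closure_union_biUnion_eq_univ hU
  have hS_countable : S.Countable := countable S hS
  have : Countable S := hS_countable
  rw [← isSeparable_univ_iff, ← cover, biUnion_eq_iUnion]
  exact hS_countable.isSeparable.closure.union (.iUnion fun x ↦ hU_sep x)

theorem isSeparable_preimage_val (A U : Set X) [SeparableSpace ↥(A ∩ U)] :
    IsSeparable ((↑) ⁻¹' U : Set A) := by
  have range_eq : range (inclusion (inter_subset_left : A ∩ U ⊆ A)) = (↑) ⁻¹' U := by
    ext x
    simp [range_inclusion]
  exact range_eq ▸ isSeparable_range (continuous_inclusion inter_subset_left)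

theorem countable_of_isDiscrete_subtype
    (countable : ∀ S : Set X, IsDiscrete S → S.Countable) {A : Set X} {S : Set A}
    (hS : IsDiscrete S) : S.Countable :=
  countable_of_injective_of_countable_image Subtype.val_injective.injOn
    (countable _ (hS.image .subtypeVal))

theorem IsEuclidean.separableSpace_of_subset {n : ℕ} {U A : Set X}
    (hU : IsEuclidean n U) (hA : A ⊆ U) : SeparableSpace A := by
  obtain ⟨-, ⟨e⟩⟩ := hU
  have : SecondCountableTopology U := e.secondCountableTopology
  have : SecondCountableTopology A := (IsEmbedding.inclusion hA).secondCountableTopology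
  infer_instance

theorem stmt19_general (hX : ∀ x : X, ∃ U ∈ 𝓝 x, ∀ A ⊆ U, SeparableSpace A) :
    (∀ A : Set X, SeparableSpace A) ↔ ∀ A : Set X, DiscreteTopology A → A.Countable := by
  refine ⟨fun separable A _ ↦ separableSpace_iff_countable.1 (separable A), fun countable A ↦ ?_⟩
  refine separableSpace_of_forall_isDiscrete_countable (fun a ↦ ?_) fun S hS ↦
    countable_of_isDiscrete_subtype (fun T hT ↦ countable T hT.to_subtype) hS
  obtain ⟨U, hU, separable⟩ := hX a
  have : SeparableSpace ↥(A ∩ U) := separable _ inter_subset_right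
  exact ⟨Subtype.val ⁻¹' U, continuousAt_subtype_val hU, isSeparable_preimage_val A U⟩

end

/-- A manifold is hereditarily separable iff it has no uncountable
discrete subset. -/
theorem stmt19 {M : Type u} [TopologicalSpace M] (n : ℕ) (hM : IsNManifold M n) :
    (∀ A : Set M, SeparableSpace A) ↔
      ∀ A : Set M, DiscreteTopology A → A.Countable :=
  stmt19_general fun x ↦
    let ⟨U, hxU, hU⟩ := hM.2 x
    ⟨U, hU.1.mem_nhds hxU, fun _ ↦ hU.separableSpace_of_subset⟩
end
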